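/- Left contraction for E-separation: for every directed graph G = (V, E_d) and all subsets A, B, C, D ⊆ V, if (A, B, C) ∈ I_E^G and (D, B, A ∪ C) ∈ I_E^G, then (A ∪ D, B, C) ∈ I_E^G. -/

import Mathlib

namespace ESepPaper

/-- A directed mixed graph: directed edges and bidirected edges over a node type `V`.
A directed graph (DG) is a DMG with `Ebi = ∅`. -/
structure DMG (V : Type) where
  Ed : Set (V × V)
  Ebi : Set (Sym2 V)

variable {V : Type}

/-- `G.ancestor u v` : there is a directed path `u → … → v` (possibly trivial). -/
def DMG.ancestor (G : DMG V) : V → V → Prop :=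
  Relation.ReflTransGen (fun u v => (u, v) ∈ G.Ed)

/-- Ancestors of a set `C`. -/
def DMG.anc (G : DMG V) (C : Set V) : Set V := {u | ∃ v ∈ C, G.ancestor u v}

/-- Strongly connected component of `v`. -/
def DMG.scc (G : DMG V) (v : V) : Set V := {w | G.ancestor w v ∧ G.ancestor v w}

/-- Parents of a set of nodes. -/
def DMG.pa (G : DMG V) (S : Set V) : Set V := {w | ∃ v ∈ S, (w, v) ∈ G.Ed}

/-- Kind of a traversed edge on a walk: forward directed, backward directed, or bidirected. -/
inductive LinkType | fwd | bwd | bi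
deriving DecidableEq

/-- Validity of a link of kind `t` between consecutive walk nodes `u` and `v`. -/
def DMG.linkOK (G : DMG V) (u v : V) : LinkType → Prop
  | .fwd => (u, v) ∈ G.Ed
  | .bwd => (v, u) ∈ G.Ed
  | .bi => s(u, v) ∈ G.Ebi

/-- Arrowhead at the second (right) endpoint of the link. -/
def LinkType.headR : LinkType → Prop
  | .fwd => True
  | .bwd => False
  | .bi => True

/-- Arrowhead at the first (left) endpoint of the link. -/
def LinkType.headL : LinkType → Prop
  | .fwd => False
  | .bwd => True
  | .bi => True

/-- Tail at the second (right) endpoint. -/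
def LinkType.tailR (t : LinkType) : Prop := t = .bwd

/-- Tail at the first (left) endpoint. -/
def LinkType.tailL (t : LinkType) : Prop := t = .fwd

/-- Walks in a DMG. -/
inductive DMG.Walk (G : DMG V) : V → V → Type
  | nil (v : V) : DMG.Walk G v v
  | cons {u v w : V} (t : LinkType) (h : G.linkOK u v t) (p : DMG.Walk G v w) : DMG.Walk G u w

/-- An interior node on a walk, whose incoming link is `t1` and outgoing link is `t2`,
is a collider iff both links have an arrowhead at it. -/
def colliderAt (t1 t2 : LinkType) : Prop := t1.headR ∧ t2.headL

/-- An interior non-collider `v` between neighbours `u` (incoming link `t1`) and `w`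
(outgoing link `t2`) is unblockable: on every side where the link has a tail at `v`, the
corresponding neighbour lies in `scc_G(v)` (left-chain/right-chain/fork cases). -/
def unblockableAt (G : DMG V) (u v w : V) (t1 t2 : LinkType) : Prop :=
  (t1.tailR → u ∈ G.scc v) ∧ (t2.tailL → w ∈ G.scc v)

namespace DMG.Walk

variable {G : DMG V}

/-- First node of a walk. -/
def first {a b : V} (_ : G.Walk a b) : V := a

def length : {a b : V} → G.Walk a b → ℕ
  | _, _, .nil _ => 0
  | _, _, .cons _ _ p => p.length + 1

def support : {a b : V} → G.Walk a b → List V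
  | a, _, .nil _ => [a]
  | a, _, .cons _ _ p => a :: p.support

/-- Auxiliary: σ-openness of the remainder of a walk, where `u` is the previous node and
`t1` the link from `u` into the current first node. -/
def sigmaOpenAux (C : Set V) : (u : V) → LinkType → {b c : V} → G.Walk b c → Prop
  | _, _, _, _, .nil _ => True
  | u, t1, v, _, .cons t2 _ q =>
      ((colliderAt t1 t2 → v ∈ G.anc C) ∧
       (¬ colliderAt t1 t2 → ¬ unblockableAt G u v q.first t1 t2 → v ∉ C)) ∧
      sigmaOpenAux C v t2 q

/-- The walk is σ-open given `C`: every collider on it is an ancestor of a node of `C`, and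
no blockable non-collider on it lies in `C`. -/
def sigmaOpen (C : Set V) : {a b : V} → G.Walk a b → Prop
  | _, _, .nil _ => True
  | a, _, .cons t _ q => sigmaOpenAux C a t q

/-- All links are forward directed. -/
def IsDirected : {a b : V} → G.Walk a b → Prop
  | _, _, .nil _ => True
  | _, _, .cons t _ p => t = .fwd ∧ p.IsDirected

/-- Interior nodes of the walk (all nodes except the two endpoints). -/
def interior {a b : V} (p : G.Walk a b) : List V := p.support.tail.dropLast

/-- Arrowhead at the first endpoint. -/
def headAtStart : {a b : V} → G.Walk a b → Prop
  | _, _, .nil _ => False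
  | _, _, .cons t _ _ => t.headL

def headAtEndAux : LinkType → {a b : V} → G.Walk a b → Prop
  | t, _, _, .nil _ => t.headR
  | _, _, _, .cons t _ q => headAtEndAux t q

/-- Arrowhead at the last endpoint. -/
def headAtEnd : {a b : V} → G.Walk a b → Prop
  | _, _, .nil _ => False
  | _, _, .cons t _ q => headAtEndAux t q

def noCollidersAux : LinkType → {a b : V} → G.Walk a b → Prop
  | _, _, _, .nil _ => True
  | t1, _, _, .cons t2 _ q => ¬ colliderAt t1 t2 ∧ noCollidersAux t2 q

/-- There is no collider on the walk. -/
def NoColliders : {a b : V} → G.Walk a b → Prop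
  | _, _, .nil _ => True
  | _, _, .cons t _ q => noCollidersAux t q

def collidersInAux (S : Set V) : LinkType → {a b : V} → G.Walk a b → Prop
  | _, _, _, .nil _ => True
  | t1, v, _, .cons t2 _ q => (colliderAt t1 t2 → v ∈ S) ∧ collidersInAux S t2 q

/-- Every collider on the walk lies in `S`. -/
def CollidersIn (S : Set V) : {a b : V} → G.Walk a b → Prop
  | _, _, .nil _ => True
  | _, _, .cons t _ q => collidersInAux S t q

def noncollUnblAux : (u : V) → LinkType → {b c : V} → G.Walk b c → Prop
  | _, _, _, _, .nil _ => True
  | u, t1, v, _, .cons t2 _ q =>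
      (¬ colliderAt t1 t2 → unblockableAt G u v q.first t1 t2) ∧ noncollUnblAux v t2 q

/-- Every interior non-collider on the walk is unblockable. -/
def NoncollidersUnblockable : {a b : V} → G.Walk a b → Prop
  | _, _, .nil _ => True
  | a, _, .cons t _ q => noncollUnblAux a t q

/-- The set of edges occurring on a walk (directed edges as ordered pairs in `E_d`,
bidirected edges as unordered pairs). -/
def edges : {a b : V} → G.Walk a b → Set ((V × V) ⊕ Sym2 V)
  | _, _, .nil _ => ∅
  | a, _, .cons t _ p =>
      insert (match t with
        | .fwd => Sum.inl (a, p.first)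
        | .bwd => Sum.inl (p.first, a)
        | .bi => Sum.inr s(a, p.first)) p.edges

/-- Concatenation of walks. -/
def append : {a b c : V} → G.Walk a b → G.Walk b c → G.Walk a c
  | _, _, _, .nil _, q => q
  | _, _, _, .cons t h p, q => .cons t h (p.append q)

/-- A walk `v_0, …, v_{n+1}` is a path if no node besides the final endpoint occurs more
than once, i.e. `v_0, …, v_n` are pairwise distinct. -/
def IsPath {a b : V} (p : G.Walk a b) : Prop := p.support.dropLast.Nodup

end DMG.Walk

/-- `A` is σ-separated from `B` given `C` in `G`: every walk from a node of `A` to a node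
of `B` is σ-blocked given `C`. -/
def DMG.sigmaSep (G : DMG V) (A B C : Set V) : Prop :=
  ∀ a ∈ A, ∀ b ∈ B, ∀ p : G.Walk a b, ¬ p.sigmaOpen C

/-- The lifted dependency graph of `G`, on two copies of `V`
(`Sum.inl` is the past copy `V_0`, `Sum.inr` the future copy `V_1`). -/
def DMG.lift (G : DMG V) : DMG (V ⊕ V) where
  Ed := {e | ∃ u v, (u, v) ∈ G.Ed ∧
        (e = (Sum.inl u, Sum.inl v) ∨ e = (Sum.inl u, Sum.inr v) ∨
         e = (Sum.inr u, Sum.inr v))}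
  Ebi := {e | ∃ u v, s(u, v) ∈ G.Ebi ∧
        (e = s(Sum.inl u, Sum.inl v) ∨ e = s(Sum.inl u, Sum.inr v) ∨
         e = s(Sum.inr u, Sum.inl v) ∨ e = s(Sum.inr u, Sum.inr v))}

/-- `B` is E-separated from `A` given `C` in `G`:
`A_0` is σ-separated from `B_1` given `C_0 ∪ (C_1 \ B_1)` in the lifted dependency graph. -/
def DMG.ESep (G : DMG V) (A B C : Set V) : Prop :=
  G.lift.sigmaSep (Sum.inl '' A) (Sum.inr '' B)
    ((Sum.inl '' C) ∪ ((Sum.inr '' C) \ (Sum.inr '' B)))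

/-- The independence model `I_E^G` of E-separation triples. -/
def DMG.IE (G : DMG V) : Set (Set V × Set V × Set V) :=
  {t | G.ESep t.1 t.2.1 t.2.2}


/-- The latent projection of `G` onto the observed nodes `O`: a directed edge when there is
a non-trivial directed walk whose interior nodes are all latent, and a bidirected edge when
there is a non-trivial collider-free walk with arrowheads at both endpoints whose interior
nodes are all latent. -/
def DMG.latentProj (G : DMG V) (O : Set V) : DMG O where
  Ed := {e | ∃ p : G.Walk e.1.val e.2.val,
          p.IsDirected ∧ 0 < p.length ∧ ∀ x ∈ p.interior, x ∉ O}
  Ebi := {e | ∃ u v : O, e = s(u, v) ∧ ∃ p : G.Walk u.val v.val,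
          p.headAtStart ∧ p.headAtEnd ∧ p.NoColliders ∧ 0 < p.length ∧
          ∀ x ∈ p.interior, x ∉ O}

/-- The last edge of the walk `p` before entering `scc_G(w)` has an arrowhead at its
endpoint in `scc_G(w)` (vacuous if the walk never leaves `scc_G(w)`). -/
def DMG.lastEdgeInto (G : DMG V) {a b : V} (w : V) (p : G.Walk a b) : Prop :=
  (∀ x ∈ p.support, x ∈ G.scc w) ∨
  ∃ (x y : V) (t : LinkType) (h : G.linkOK x y t) (p₁ : G.Walk a x) (p₂ : G.Walk y b),
    p = p₁.append (.cons t h p₂) ∧ x ∉ G.scc w ∧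
    (∀ z ∈ p₂.support, z ∈ G.scc w) ∧ t.headR

/-- An (asymmetric) inducing path from `v` to `w`: a non-trivial path such that every
collider on it is an ancestor of `v` or `w`, every interior non-collider is unblockable,
and the last edge before entering `scc_G(w)` points into `scc_G(w)`. -/
def DMG.IsInducingPath (G : DMG V) {v w : V} (p : G.Walk v w) : Prop :=
  0 < p.length ∧ p.IsPath ∧
  p.CollidersIn (G.anc {v, w}) ∧ p.NoncollidersUnblockable ∧ G.lastEdgeInto w p

theorem lc_edge {G : DMG V} {a : V} {u : V ⊕ V} (h : (Sum.inr a, u) ∈ G.lift.Ed) :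
    (∃ w, u = Sum.inr w) ∧ (Sum.inl a, u) ∈ G.lift.Ed := by
  obtain ⟨x, y, hxy, h | h | h⟩ := h
  · simp at h
  · simp at h
  · simp only [Prod.mk.injEq, Sum.inr.injEq] at h
    obtain ⟨rfl, rfl⟩ := h
    exact ⟨⟨_, rfl⟩, _, _, hxy, Or.inr (Or.inl rfl)⟩

theorem lc_fwd {W : Type} {H : DMG W} {K : Set W} {u u' b c : W} (p : H.Walk b c)
    (h : p.sigmaOpenAux K u .fwd) : p.sigmaOpenAux K u' .fwd := by
  cases p with
  | nil => trivial
  | cons t hl q =>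
    simpa [DMG.Walk.sigmaOpenAux, unblockableAt, LinkType.tailR] using h

theorem lc_main (G : DMG V) (A B C : Set V) (K K' : Set (V ⊕ V))
    (hK : K ⊆ K')
    (hdiff : ∀ v ∈ K', v ∉ K → (∃ a ∈ A, v = Sum.inl a) ∨ (∃ a ∈ A, v = Sum.inr a))
    (h1 : G.lift.sigmaSep (Sum.inl '' A) (Sum.inr '' B) K)
    {v b : V ⊕ V} (p : G.lift.Walk v b) (hb : b ∈ Sum.inr '' B) :
    ∀ (u : V ⊕ V) (t1 : LinkType), G.lift.linkOK u v t1 →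
      (t1 = .bwd → (∃ w, u = Sum.inr w) → u ∈ G.lift.anc K) →
      p.sigmaOpenAux K u t1 → p.sigmaOpenAux K' u t1 := by
  induction p with
  | nil => intros; trivial
  | @cons v x b t2 hl q ih =>
    intro u t1 hl1 hinv hop
    have hop' := hop
    obtain ⟨⟨hc, hn⟩, hq⟩ := hop
    refine ⟨⟨fun h => ?_, fun h h' hv => ?_⟩, ih hb v t2 hl ?_ hq⟩
    · obtain ⟨w, hw, hvw⟩ := hc h
      exact ⟨w, hK hw, hvw⟩
    · rcases hdiff v hv (hn h h') with ⟨a, ha, rfl⟩ | ⟨a, ha, rfl⟩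
      · exact h1 _ ⟨a, ha, rfl⟩ _ hb (.cons t2 hl q) hq
      · by_cases ht2 : t2 = .fwd
        · subst ht2
          exact h1 _ ⟨a, ha, rfl⟩ _ hb (.cons .fwd (lc_edge hl).2 q) (lc_fwd q hq)
        · have ht1 : t1 = .bwd := by
            cases t1 <;> cases t2 <;> simp_all [colliderAt, LinkType.headR, LinkType.headL]
          subst ht1
          have hu := lc_edge hl1
          refine h1 _ ⟨a, ha, rfl⟩ _ hb (.cons .fwd hu.2 (.cons .bwd hl1 (.cons t2 hl q))) ?_
          refine ⟨⟨fun _ => hinv rfl hu.1, fun h => ?_⟩, hop'⟩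
          exact absurd ⟨trivial, trivial⟩ h
    · rintro rfl ⟨w, rfl⟩
      by_cases ht1 : t1 = .bwd
      · subst ht1
        obtain ⟨c, hcK, huc⟩ := hinv rfl (lc_edge hl1).1
        exact ⟨c, hcK, Relation.ReflTransGen.head hl1 huc⟩
      · apply hc
        cases t1 <;> simp_all [colliderAt, LinkType.headR, LinkType.headL]

/-- Left contraction (LC) for E-separation. -/
theorem left_contraction {V : Type} [Fintype V] (G : DMG V) (hG : G.Ebi = ∅)
    (A B C D : Set V) (h1 : (A, B, C) ∈ G.IE) (h2 : (D, B, A ∪ C) ∈ G.IE) :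
    (A ∪ D, B, C) ∈ G.IE := by
  rintro _ ⟨a, ha | ha, rfl⟩ b hb p hp
  · exact h1 _ ⟨a, ha, rfl⟩ b hb p hp
  · refine h2 _ ⟨a, ha, rfl⟩ b hb p ?_
    cases p with
    | nil => trivial
    | cons t hl q =>
      refine lc_main G A B C _ _ ?_ ?_ h1 q hb _ t hl ?_ hp
      · rintro x (⟨c, hc, rfl⟩ | ⟨⟨c, hc, rfl⟩, hx⟩)
        · exact Or.inl ⟨c, Or.inr hc, rfl⟩
        · exact Or.inr ⟨⟨c, Or.inr hc, rfl⟩, hx⟩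
      · rintro x (⟨c, hc | hc, rfl⟩ | ⟨⟨c, hc | hc, rfl⟩, hx⟩) hn
        · exact Or.inl ⟨c, hc, rfl⟩
        · exact absurd (Or.inl ⟨c, hc, rfl⟩) hn
        · exact Or.inr ⟨c, hc, rfl⟩
        · exact absurd (Or.inr ⟨⟨c, hc, rfl⟩, hx⟩) hn
      · rintro _ ⟨w, hw⟩
        cases hw

end ESepPaper
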